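/- arXiv:1011.0233 — 2 statements merged into one kernel-verified Lean document; each statement's English description precedes it below -/
import Mathlib

section
/- Let φ be a 3-SAT instance over propositional variables p_1, …, p_n and let N_φ be the associated basic CDC network. If N_φ is satisfiable by connected regions, then φ is satisfiable; indeed, the assignment π defined by π(p_i) = true iff u_i is vertical w.r.t. f_i in a given solution of N_φ satisfies every clause of φ. -/
/-!
Suppose a clause `c` is violated by the assignment read off from a solution, and let `X_c` be the
list `w₀, u_r*, w_rs, u_s*, w_st, u_t*, w₁`. No constraint `v_c T x` with `x ∈ X_c` allows `O` or a
northern tile, and `x` lies in the bounding box of `v_c`; so above the height `max y⁻(x)` the region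
`v_c` avoids every column `I_x(x)`, while `v_c` does reach above that height and its first
coordinates lie between `x⁻(w₀)` and `x⁺(w₁)`. It therefore suffices to see that the intervals
`I_x(x)` chain together, which contradicts the existence of such a point (`not_all_falseLit`).

They chain because every literal region `u_i*` is then horizontal with respect to its frame `f_i*`,
hence spans it, and consecutive `w`'s overlap the frames. Horizontality comes from `N_⌜`, which
forces the upper-left-corner relation (`ulc_of_net`): for a positive literal, not vertical means
horizontal; for a negative one, `u_i` vertical makes `u_{¬i}` horizontal
(`horiz_neg_of_vert`), as two vertical pairs would put `M(u_i)` inside `M(u_{¬i})`.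
-/

open Set

/-- A "region" variable ranges over subsets of the plane ℝ². -/
abbrev Reg : Type := Set (ℝ × ℝ)

/-- `x⁻(a)`: infimum of first coordinates of points of `a`. -/
noncomputable def xm (a : Reg) : ℝ := sInf (Prod.fst '' a)
/-- `x⁺(a)`: supremum of first coordinates of points of `a`. -/
noncomputable def xp (a : Reg) : ℝ := sSup (Prod.fst '' a)
/-- `y⁻(a)`: infimum of second coordinates of points of `a`. -/
noncomputable def ym (a : Reg) : ℝ := sInf (Prod.snd '' a)
/-- `y⁺(a)`: supremum of second coordinates of points of `a`. -/
noncomputable def yp (a : Reg) : ℝ := sSup (Prod.snd '' a)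

/-- `I_x(a) = [x⁻(a), x⁺(a)]`. -/
noncomputable def Ix (a : Reg) : Set ℝ := Icc (xm a) (xp a)
/-- `I_y(a) = [y⁻(a), y⁺(a)]`. -/
noncomputable def Iy (a : Reg) : Set ℝ := Icc (ym a) (yp a)
/-- Minimum bounding rectangle `M(a) = I_x(a) × I_y(a)`. -/
noncomputable def MBR (a : Reg) : Reg := Ix a ×ˢ Iy a

/-- The nine tile names. -/
inductive Tile : Type
  | NW | N | NE | W | O | E | SW | S | SE
  deriving DecidableEq

/-- The nine tiles of a region `b`. -/
noncomputable def Tile.region : Tile → Reg → Reg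
  | .O,  b => Ix b ×ˢ Iy b
  | .N,  b => Ix b ×ˢ Ici (yp b)
  | .S,  b => Ix b ×ˢ Iic (ym b)
  | .E,  b => Ici (xp b) ×ˢ Iy b
  | .W,  b => Iic (xm b) ×ˢ Iy b
  | .NE, b => Ici (xp b) ×ˢ Ici (yp b)
  | .NW, b => Iic (xm b) ×ˢ Ici (yp b)
  | .SE, b => Ici (xp b) ×ˢ Iic (ym b)
  | .SW, b => Iic (xm b) ×ˢ Iic (ym b)

/-- The basic CDC constraint `a T b`: the set of tile names `χ` with
`interior a ∩ χ(b) ≠ ∅` is exactly `T`. -/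
def cdc (a : Reg) (T : Set Tile) (b : Reg) : Prop :=
  ∀ χ : Tile, (interior a ∩ χ.region b).Nonempty ↔ χ ∈ T

/-- A region: a nonempty bounded regular closed subset of the plane. -/
def IsRegion (a : Reg) : Prop :=
  a.Nonempty ∧ Bornology.IsBounded a ∧ a = closure (interior a)

/-- A connected region: a region whose interior is connected. -/
def IsConnRegion (a : Reg) : Prop :=
  IsRegion a ∧ IsConnected (interior a)

/-- An axis-parallel (nondegenerate, closed) rectangle. -/
def IsRect (a : Reg) : Prop :=
  ∃ x1 x2 y1 y2 : ℝ, x1 < x2 ∧ y1 < y2 ∧ a = Icc x1 x2 ×ˢ Icc y1 y2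

/- Basic IA relations on intervals given by their endpoint pairs. -/
def RAs  (I J : ℝ × ℝ) : Prop := I.1 = J.1 ∧ I.2 < J.2
def RAf  (I J : ℝ × ℝ) : Prop := J.1 < I.1 ∧ I.2 = J.2
def RAsi (I J : ℝ × ℝ) : Prop := RAs J I
def RAfi (I J : ℝ × ℝ) : Prop := RAf J I
def RAo  (I J : ℝ × ℝ) : Prop := I.1 < J.1 ∧ J.1 < I.2 ∧ I.2 < J.2
def RAeq (I J : ℝ × ℝ) : Prop := I = J

/-- `(a, b) ∈ α⊗β`: `I_x(a) α I_x(b)` and `I_y(a) β I_y(b)`. -/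
def RA (α β : ℝ × ℝ → ℝ × ℝ → Prop) (a b : Reg) : Prop :=
  α (xm a, xp a) (xm b, xp b) ∧ β (ym a, yp a) (ym b, yp b)

/-- `a` is vertical w.r.t. `b`: `(a, b) ∈ s⊗fi`. -/
def Vert (a b : Reg) : Prop := RA RAs RAfi a b
/-- `a` is horizontal w.r.t. `b`: `(a, b) ∈ si⊗f`. -/
def Horiz (a b : Reg) : Prop := RA RAsi RAf a b
/-- The upper-left-corner relation `⌜(a,b)`. -/
def ULC (a b : Reg) : Prop := Vert a b ∨ Horiz a b

/-- The network `N_⌜(u, v; w₁, w₂)`. -/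
def NetULC (u v w1 w2 : Reg) : Prop :=
  cdc u {Tile.O} w1 ∧ cdc w1 {Tile.E, Tile.SE, Tile.S, Tile.O} u ∧
  cdc v {Tile.O} w1 ∧ cdc w1 {Tile.E, Tile.SE, Tile.S} v ∧
  cdc v {Tile.O} w2 ∧ cdc w2 {Tile.E, Tile.SE, Tile.S, Tile.O} v ∧
  cdc u {Tile.O} w2 ∧ cdc w2 {Tile.E, Tile.SE, Tile.S} u

/-- The network `N_∥(u, v; w)`. -/
def NetPar (u v w : Reg) : Prop :=
  cdc u {Tile.E} w ∧ cdc w {Tile.E} v ∧ cdc v {Tile.W} u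

/-- The network `N_p` for a propositional variable `p`, over the regions
`u_p, u_{¬p}, f_p, f_{¬p}, f_p⁰` and six auxiliary regions. -/
def NetP (up unp fp fnp fp0 a1 a2 b1 b2 c1 c2 : Reg) : Prop :=
  cdc up {Tile.O} fnp ∧ cdc fp {Tile.O} unp ∧
  NetULC up fp a1 a2 ∧ NetULC unp fnp b1 b2 ∧ NetULC up unp c1 c2 ∧
  cdc fp {Tile.O} fnp ∧ cdc fnp {Tile.E, Tile.SE, Tile.S, Tile.O} fp ∧
  cdc unp {Tile.O} fp0 ∧ cdc fp0 {Tile.E, Tile.SE, Tile.S, Tile.O} unp ∧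
  cdc fnp {Tile.O} fp0 ∧ cdc fp0 {Tile.E, Tile.SE, Tile.S, Tile.O} fnp

/-- The reference network `N_ref`. -/
def NetRef (wref fref fnref f0ref : Reg) : Prop :=
  cdc wref {Tile.O} fref ∧ cdc fref {Tile.O} fnref ∧ cdc fnref {Tile.O} f0ref ∧
  cdc f0ref {Tile.S, Tile.O} fnref ∧ cdc fnref {Tile.S, Tile.O} fref ∧
  cdc fref {Tile.S, Tile.O} wref

/-- An assignment of regions to all variables of the network `N_V`
(for propositional variables `p_1, …, p_n`):
`u i, un i, f i, fn i, f0 i` are `u_i, u_{¬i}, f_i, f_{¬i}, f_i⁰`;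
`a1 i, a2 i, b1 i, b2 i, c1 i, c2 i` are the six auxiliary regions of `N_{p_i}`;
`wref, fref, fnref, f0ref` are the reference regions; and
`pf i, pfn i, pf0 i` are the auxiliary regions of the parallel networks
linking `f_i` (resp. `f_{¬i}`, `f_i⁰`) to its predecessor. -/
structure VAssign (n : ℕ) where
  (u un f fn f0 : Fin n → Reg)
  (a1 a2 b1 b2 c1 c2 : Fin n → Reg)
  (wref fref fnref f0ref : Reg)
  (pf pfn pf0 : Fin n → Reg)

/-- The predecessor in a chain: `g (i-1)` if `i > 0`, else the default `d`. -/
def prevOr {n : ℕ} (g : Fin n → Reg) (d : Reg) (i : Fin n) : Reg :=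
  if 0 < i.val then g ⟨i.val - 1, lt_of_le_of_lt (Nat.sub_le _ _) i.isLt⟩ else d

/-- All the constraints of the network `N_V` hold. -/
def VAssign.Holds {n : ℕ} (S : VAssign n) : Prop :=
  (∀ i, NetP (S.u i) (S.un i) (S.f i) (S.fn i) (S.f0 i)
      (S.a1 i) (S.a2 i) (S.b1 i) (S.b2 i) (S.c1 i) (S.c2 i)) ∧
  NetRef S.wref S.fref S.fnref S.f0ref ∧
  (∀ i, NetPar (S.f i) (prevOr S.f S.fref i) (S.pf i)) ∧
  (∀ i, NetPar (S.fn i) (prevOr S.fn S.fnref i) (S.pfn i)) ∧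
  (∀ i, NetPar (S.f0 i) (prevOr S.f0 S.f0ref i) (S.pf0 i))

/-- Every region of the assignment is a connected region. -/
def VAssign.AllConn {n : ℕ} (S : VAssign n) : Prop :=
  (∀ i, IsConnRegion (S.u i) ∧ IsConnRegion (S.un i) ∧ IsConnRegion (S.f i) ∧
     IsConnRegion (S.fn i) ∧ IsConnRegion (S.f0 i) ∧ IsConnRegion (S.a1 i) ∧
     IsConnRegion (S.a2 i) ∧ IsConnRegion (S.b1 i) ∧ IsConnRegion (S.b2 i) ∧
     IsConnRegion (S.c1 i) ∧ IsConnRegion (S.c2 i) ∧ IsConnRegion (S.pf i) ∧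
     IsConnRegion (S.pfn i) ∧ IsConnRegion (S.pf0 i)) ∧
  IsConnRegion S.wref ∧ IsConnRegion S.fref ∧ IsConnRegion S.fnref ∧
  IsConnRegion S.f0ref

/-- Every region of the assignment is an axis-parallel rectangle. -/
def VAssign.AllRect {n : ℕ} (S : VAssign n) : Prop :=
  (∀ i, IsRect (S.u i) ∧ IsRect (S.un i) ∧ IsRect (S.f i) ∧
     IsRect (S.fn i) ∧ IsRect (S.f0 i) ∧ IsRect (S.a1 i) ∧
     IsRect (S.a2 i) ∧ IsRect (S.b1 i) ∧ IsRect (S.b2 i) ∧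
     IsRect (S.c1 i) ∧ IsRect (S.c2 i) ∧ IsRect (S.pf i) ∧
     IsRect (S.pfn i) ∧ IsRect (S.pf0 i)) ∧
  IsRect S.wref ∧ IsRect S.fref ∧ IsRect S.fnref ∧ IsRect S.f0ref

/-- A clause `c = p_r* ∨ p_s* ∨ p_t*` with `r < s < t`; the Booleans record
whether each literal is positive (`true`) or negative (`false`). -/
structure Clause (n : ℕ) where
  r : Fin n
  s : Fin n
  t : Fin n
  hrs : r < s
  hst : s < t
  sr : Bool
  ss : Bool
  st : Bool

/-- An assignment of regions to the fresh variables of a clause network `N_c`: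
`vc, w₀, w_rs, w_st, w₁` plus the two auxiliary regions `pa, pb` of the
parallel networks for `w₀` and `w₁`. -/
structure CAssign where
  vc : Reg
  w0 : Reg
  wrs : Reg
  wst : Reg
  w1 : Reg
  pa : Reg
  pb : Reg

/-- `u_i*`: `u_i` for a positive literal and `u_{¬i}` for a negative one. -/
def ustar {n : ℕ} (S : VAssign n) (i : Fin n) (sign : Bool) : Reg :=
  if sign then S.u i else S.un i

/-- The frame of literal `p_i*`: `f_i` for a positive literal, `f_{¬i}` otherwise. -/
def fstar {n : ℕ} (S : VAssign n) (i : Fin n) (sign : Bool) : Reg :=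
  if sign then S.f i else S.fn i

/-- All the constraints of the clause network `N_c` (including those of `N_V`). -/
def NetC {n : ℕ} (S : VAssign n) (c : Clause n) (C : CAssign) : Prop :=
  S.Holds ∧
  NetPar C.w0 S.wref C.pa ∧ NetPar C.w1 S.wref C.pb ∧
  cdc C.w0 {Tile.W, Tile.O} (S.f c.r) ∧
  cdc (S.f c.r) {Tile.E, Tile.SE, Tile.S, Tile.O} C.w0 ∧
  (if c.sr then
    cdc (S.f c.r) {Tile.W, Tile.O} C.wrs ∧ cdc C.wrs {Tile.E, Tile.O} (S.f c.r)
   else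
    cdc (S.fn c.r) {Tile.S, Tile.SW, Tile.W, Tile.O} C.wrs ∧
    cdc C.wrs {Tile.E, Tile.O} (S.fn c.r)) ∧
  cdc C.wrs {Tile.W, Tile.O} (S.f c.s) ∧ cdc (S.f c.s) {Tile.E, Tile.O} C.wrs ∧
  (if c.ss then
    cdc (S.f c.s) {Tile.W, Tile.O} C.wst ∧ cdc C.wst {Tile.E, Tile.O} (S.f c.s)
   else
    cdc (S.fn c.s) {Tile.S, Tile.SW, Tile.W, Tile.O} C.wst ∧
    cdc C.wst {Tile.E, Tile.O} (S.fn c.s)) ∧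
  cdc C.wst {Tile.W, Tile.O} (S.f c.t) ∧ cdc (S.f c.t) {Tile.E, Tile.O} C.wst ∧
  (if c.st then
    cdc (S.f c.t) {Tile.S, Tile.SW, Tile.W, Tile.O} C.w1 ∧
    cdc C.w1 {Tile.E, Tile.O} (S.f c.t)
   else
    cdc (S.fn c.t) {Tile.S, Tile.SW, Tile.W, Tile.O} C.w1 ∧
    cdc C.w1 {Tile.E, Tile.O} (S.fn c.t)) ∧
  cdc C.w0 {Tile.O} C.vc ∧
  cdc (ustar S c.r c.sr) {Tile.O} C.vc ∧
  cdc C.wrs {Tile.O} C.vc ∧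
  cdc (ustar S c.s c.ss) {Tile.O} C.vc ∧
  cdc C.wst {Tile.O} C.vc ∧
  cdc (ustar S c.t c.st) {Tile.O} C.vc ∧
  cdc C.w1 {Tile.O} C.vc ∧
  cdc C.vc {Tile.E, Tile.SE, Tile.S} C.w0 ∧
  cdc C.vc {Tile.S, Tile.SW, Tile.W} C.w1 ∧
  cdc C.vc {Tile.E, Tile.SE, Tile.S, Tile.SW, Tile.W} (ustar S c.r c.sr) ∧
  cdc C.vc {Tile.E, Tile.SE, Tile.S, Tile.SW, Tile.W} C.wrs ∧
  cdc C.vc {Tile.E, Tile.SE, Tile.S, Tile.SW, Tile.W} (ustar S c.s c.ss) ∧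
  cdc C.vc {Tile.E, Tile.SE, Tile.S, Tile.SW, Tile.W} C.wst ∧
  cdc C.vc {Tile.E, Tile.SE, Tile.S, Tile.SW, Tile.W} (ustar S c.t c.st)

/-- Every clause region is a connected region. -/
def CAssign.AllConn (C : CAssign) : Prop :=
  IsConnRegion C.vc ∧ IsConnRegion C.w0 ∧ IsConnRegion C.wrs ∧
  IsConnRegion C.wst ∧ IsConnRegion C.w1 ∧ IsConnRegion C.pa ∧ IsConnRegion C.pb

/-- Every clause region except `v_c` is an axis-parallel rectangle. -/
def CAssign.RectExceptVc (C : CAssign) : Prop :=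
  IsRect C.w0 ∧ IsRect C.wrs ∧ IsRect C.wst ∧ IsRect C.w1 ∧
  IsRect C.pa ∧ IsRect C.pb

/-! ### Bounding boxes and interior points -/

lemma IsRegion.bounds {a : Reg} (ha : IsRegion a) {p : ℝ × ℝ} (hp : p ∈ interior a) :
    xm a ≤ p.1 ∧ p.1 ≤ xp a ∧ ym a ≤ p.2 ∧ p.2 ≤ yp a := by
  have hpa := interior_subset hp
  obtain ⟨-, hb, -⟩ := ha
  have h1 := hb.image_fst
  have h2 := hb.image_snd
  exact ⟨csInf_le h1.bddBelow ⟨p, hpa, rfl⟩, le_csSup h1.bddAbove ⟨p, hpa, rfl⟩,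
    csInf_le h2.bddBelow ⟨p, hpa, rfl⟩, le_csSup h2.bddAbove ⟨p, hpa, rfl⟩⟩

/-- By regularity, a closed condition on interior points holds on the whole region. -/
lemma IsRegion.forall_of_interior {a : Reg} (ha : IsRegion a) {s : Set (ℝ × ℝ)} (hs : IsClosed s)
    (h : ∀ p ∈ interior a, p ∈ s) : ∀ p ∈ a, p ∈ s := by
  intro p hp
  rw [ha.2.2] at hp
  exact closure_minimal h hs hp

lemma IsRegion.le_xm {a : Reg} (ha : IsRegion a) {c : ℝ} (h : ∀ p ∈ interior a, c ≤ p.1) :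
    c ≤ xm a := by
  have := ha.forall_of_interior (isClosed_le continuous_const continuous_fst) h
  exact le_csInf (ha.1.image _) (by rintro _ ⟨p, hp, rfl⟩; exact this p hp)

lemma IsRegion.le_ym {a : Reg} (ha : IsRegion a) {c : ℝ} (h : ∀ p ∈ interior a, c ≤ p.2) :
    c ≤ ym a := by
  have := ha.forall_of_interior (isClosed_le continuous_const continuous_snd) h
  exact le_csInf (ha.1.image _) (by rintro _ ⟨p, hp, rfl⟩; exact this p hp)

lemma IsRegion.xp_le {a : Reg} (ha : IsRegion a) {c : ℝ} (h : ∀ p ∈ interior a, p.1 ≤ c) :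
    xp a ≤ c := by
  have := ha.forall_of_interior (isClosed_le continuous_fst continuous_const) h
  exact csSup_le (ha.1.image _) (by rintro _ ⟨p, hp, rfl⟩; exact this p hp)

lemma IsRegion.yp_le {a : Reg} (ha : IsRegion a) {c : ℝ} (h : ∀ p ∈ interior a, p.2 ≤ c) :
    yp a ≤ c := by
  have := ha.forall_of_interior (isClosed_le continuous_snd continuous_const) h
  exact csSup_le (ha.1.image _) (by rintro _ ⟨p, hp, rfl⟩; exact this p hp)

lemma IsRegion.ym_lt_yp {a : Reg} (ha : IsRegion a) : ym a < yp a := by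
  have hne : (interior a).Nonempty := by
    rw [← closure_nonempty_iff, ← ha.2.2]
    exact ha.1
  obtain ⟨p, hp⟩ := hne
  obtain ⟨ε, hε, hball⟩ := Metric.isOpen_iff.1 isOpen_interior p hp
  -- a point slightly above `p` is still interior
  have hq : (p.1, p.2 + ε / 2) ∈ interior a := by
    apply hball
    rw [Metric.mem_ball, Prod.dist_eq]
    simp only [dist_self, Real.dist_eq, add_sub_cancel_left, abs_of_pos (half_pos hε)]
    exact max_lt hε (half_lt_self hε)
  have h1 := (ha.bounds hp).2.2.1
  have h2 : p.2 + ε / 2 ≤ yp a := (ha.bounds hq).2.2.2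
  linarith

/-! ### Reading off a cardinal direction constraint -/

lemma cdc.mem {a b : Reg} {T : Set Tile} (h : cdc a T b) {p : ℝ × ℝ} (hp : p ∈ interior a)
    {χ : Tile} (hχ : p ∈ χ.region b) : χ ∈ T :=
  (h χ).1 ⟨p, hp, hχ⟩

lemma cdc.lt_yp {a b : Reg} {T : Set Tile} (h : cdc a T b)
    (hT : Tile.N ∉ T ∧ Tile.NE ∉ T ∧ Tile.NW ∉ T) {p : ℝ × ℝ} (hp : p ∈ interior a) :
    p.2 < yp b := by
  by_contra! hy
  rcases le_total p.1 (xm b) with h1 | h1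
  · exact hT.2.2 (h.mem hp (χ := .NW) ⟨h1, hy⟩)
  rcases le_total p.1 (xp b) with h2 | h2
  · exact hT.1 (h.mem hp (χ := .N) ⟨⟨h1, h2⟩, hy⟩)
  · exact hT.2.1 (h.mem hp (χ := .NE) ⟨h2, hy⟩)

lemma cdc.ym_lt {a b : Reg} {T : Set Tile} (h : cdc a T b)
    (hT : Tile.S ∉ T ∧ Tile.SE ∉ T ∧ Tile.SW ∉ T) {p : ℝ × ℝ} (hp : p ∈ interior a) :
    ym b < p.2 := by
  by_contra! hy
  rcases le_total p.1 (xm b) with h1 | h1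
  · exact hT.2.2 (h.mem hp (χ := .SW) ⟨h1, hy⟩)
  rcases le_total p.1 (xp b) with h2 | h2
  · exact hT.1 (h.mem hp (χ := .S) ⟨⟨h1, h2⟩, hy⟩)
  · exact hT.2.1 (h.mem hp (χ := .SE) ⟨h2, hy⟩)

lemma cdc.xm_lt {a b : Reg} {T : Set Tile} (h : cdc a T b)
    (hT : Tile.W ∉ T ∧ Tile.NW ∉ T ∧ Tile.SW ∉ T) {p : ℝ × ℝ} (hp : p ∈ interior a) :
    xm b < p.1 := by
  by_contra! hx
  rcases le_total p.2 (ym b) with h1 | h1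
  · exact hT.2.2 (h.mem hp (χ := .SW) ⟨hx, h1⟩)
  rcases le_total p.2 (yp b) with h2 | h2
  · exact hT.1 (h.mem hp (χ := .W) ⟨hx, h1, h2⟩)
  · exact hT.2.1 (h.mem hp (χ := .NW) ⟨hx, h2⟩)

lemma cdc.lt_xp {a b : Reg} {T : Set Tile} (h : cdc a T b)
    (hT : Tile.E ∉ T ∧ Tile.NE ∉ T ∧ Tile.SE ∉ T) {p : ℝ × ℝ} (hp : p ∈ interior a) :
    p.1 < xp b := by
  by_contra! hx
  rcases le_total p.2 (ym b) with h1 | h1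
  · exact hT.2.2 (h.mem hp (χ := .SE) ⟨hx, h1⟩)
  rcases le_total p.2 (yp b) with h2 | h2
  · exact hT.1 (h.mem hp (χ := .E) ⟨hx, h1, h2⟩)
  · exact hT.2.1 (h.mem hp (χ := .NE) ⟨hx, h2⟩)

/-- The constraint `a O b` says that the bounding box of `a` lies in that of `b`. -/
lemma cdc.box_le {a b : Reg} (h : cdc a {Tile.O} b) (ha : IsRegion a) :
    xm b ≤ xm a ∧ xp a ≤ xp b ∧ ym b ≤ ym a ∧ yp a ≤ yp b :=
  ⟨ha.le_xm fun _ hp => (h.xm_lt (by simp) hp).le, ha.xp_le fun _ hp => (h.lt_xp (by simp) hp).le,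
    ha.le_ym fun _ hp => (h.ym_lt (by simp) hp).le, ha.yp_le fun _ hp => (h.lt_yp (by simp) hp).le⟩

/-- If `a` meets the central tile of `b`, their first projections overlap. -/
lemma cdc.overlap {a b : Reg} {T : Set Tile} (h : cdc a T b) (hO : Tile.O ∈ T) (ha : IsRegion a) :
    xm a ≤ xp b ∧ xm b ≤ xp a := by
  obtain ⟨p, hp, ⟨h1, h2⟩, -⟩ := (h .O).2 hO
  have hb := ha.bounds hp
  exact ⟨hb.1.trans h2, h1.trans hb.2.1⟩

/-- A region `w` meeting `M(u)` but not `M(v)` witnesses that `M(u)` is not contained in `M(v)`. -/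
lemma not_box_le {u v w : Reg} {T T' : Set Tile} (hu : cdc w T u) (hv : cdc w T' v)
    (hT : Tile.O ∈ T) (hT' : Tile.O ∉ T') :
    ¬ (xm v ≤ xm u ∧ xp u ≤ xp v ∧ ym v ≤ ym u ∧ yp u ≤ yp v) := by
  rintro ⟨h1, h2, h3, h4⟩
  obtain ⟨p, hp, ⟨hx1, hx2⟩, hy1, hy2⟩ := (hu .O).2 hT
  exact hT' (hv.mem hp (χ := .O) ⟨⟨h1.trans hx1, hx2.trans h2⟩, h3.trans hy1, hy2.trans h4⟩)

/-! ### The upper-left-corner network and the literals -/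

/-- If `u` fits in `M(w)` and `w` has no western or northern part relative to `u`, the two bounding
boxes share their upper-left corner. -/
lemma corner_eq {u w : Reg} {T : Set Tile} (hu : IsRegion u) (hw : IsRegion w)
    (h : cdc u {Tile.O} w) (h' : cdc w T u)
    (hT : Tile.W ∉ T ∧ Tile.NW ∉ T ∧ Tile.SW ∉ T) (hT' : Tile.N ∉ T ∧ Tile.NE ∉ T ∧ Tile.NW ∉ T) :
    xm u = xm w ∧ yp u = yp w := by
  have hb := h.box_le hu
  exact ⟨le_antisymm (hw.le_xm fun _ hp => (h'.xm_lt hT hp).le) hb.1,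
    le_antisymm hb.2.2.2 (hw.yp_le fun _ hp => (h'.lt_yp hT' hp).le)⟩

lemma ulc_of_net {u v w1 w2 : Reg} (hu : IsRegion u) (hv : IsRegion v) (hw1 : IsRegion w1)
    (h : NetULC u v w1 w2) : ULC u v := by
  obtain ⟨h1, h2, h3, h4, -, h6, -, h8⟩ := h
  have e1 := corner_eq hu hw1 h1 h2 (by simp) (by simp)
  have e2 := corner_eq hv hw1 h3 h4 (by simp) (by simp)
  have n1 := not_box_le h2 h4 (by simp) (by simp)
  have n2 := not_box_le h6 h8 (by simp) (by simp)
  have ex : xm u = xm v := e1.1.trans e2.1.symm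
  have ey : yp u = yp v := e1.2.trans e2.2.symm
  simp only [ex, ey, le_refl, true_and, and_true, not_and_or, not_le] at n1 n2
  rcases n1 with n1 | n1
  · rcases n2 with n2 | n2
    · exact absurd n1 n2.asymm
    · exact Or.inr ⟨⟨ex.symm, n1⟩, n2, ey⟩
  · rcases n2 with n2 | n2
    · exact Or.inl ⟨⟨ex, n2⟩, n1, ey.symm⟩
    · exact absurd n1 n2.asymm

/-- `u_p` and `u_{¬p}` cannot both be vertical with respect to their frames. -/
lemma horiz_neg_of_vert {up unp fp fnp : Reg} (hup : IsRegion up) (hfp : IsRegion fp)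
    (h1 : cdc up {Tile.O} fnp) (h2 : cdc fp {Tile.O} unp)
    (hn : ULC unp fnp) (hc : ULC up unp) (hv : Vert up fp) : Horiz unp fnp := by
  rcases hn with hn | hn
  · exfalso
    have b1 := h1.box_le hup
    have b2 := h2.box_le hfp
    obtain ⟨⟨-, v1⟩, -, -⟩ := hv
    obtain ⟨-, v2, -⟩ := hn
    simp only at v1 v2
    rcases hc with ⟨-, c, -⟩ | ⟨⟨-, c⟩, -⟩ <;> simp only at c <;> linarith
  · exact hn

/-- The literal `p_i*` is falsified by the assignment read off from `S`. -/
def FalseLit {n : ℕ} (S : VAssign n) (i : Fin n) (sign : Bool) : Prop :=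
  ¬ (if sign then Vert (S.u i) (S.f i) else ¬ Vert (S.u i) (S.f i))

/-- A false literal is horizontal with respect to its frame, so its first projection spans that of
the frame; moreover it starts no later than `f_i`. -/
lemma span_of_falseLit {n : ℕ} {S : VAssign n} (hS : S.AllConn) (hH : S.Holds) {i : Fin n}
    {sign : Bool} (h : FalseLit S i sign) :
    xm (ustar S i sign) ≤ xm (S.f i) ∧ xp (fstar S i sign) ≤ xp (ustar S i sign) := by
  obtain ⟨hu, hun, hf, hfn, -, ha1, -, hb1, -, hc1, -⟩ := hS.1 i
  obtain ⟨h1, h2, hA, hB, hC, h3, -⟩ := hH.1 i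
  cases sign with
  | true =>
    have hv : ¬ Vert (S.u i) (S.f i) := by simpa [FalseLit] using h
    obtain ⟨⟨e, l⟩, -⟩ := (ulc_of_net hu.1 hf.1 ha1.1 hA).resolve_left hv
    simpa [ustar, fstar] using And.intro (ge_of_eq e) (le_of_lt l)
  | false =>
    have hv : Vert (S.u i) (S.f i) := by simpa [FalseLit] using h
    obtain ⟨⟨e, l⟩, -⟩ := horiz_neg_of_vert hu.1 hf.1 h1 h2 (ulc_of_net hun.1 hfn.1 hb1.1 hB)
      (ulc_of_net hu.1 hun.1 hc1.1 hC) hv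
    have hb := (h3.box_le hf.1).1
    simpa [ustar, fstar] using And.intro ((ge_of_eq e).trans hb) (le_of_lt l)

/-! ### The clause region -/

lemma IsRegion.star {n : ℕ} {S : VAssign n} (hS : S.AllConn) (i : Fin n) (sign : Bool) :
    IsRegion (ustar S i sign) ∧ IsRegion (fstar S i sign) := by
  obtain ⟨hu, hun, hf, hfn, -⟩ := hS.1 i
  cases sign
  · exact ⟨hun.1, hfn.1⟩
  · exact ⟨hu.1, hf.1⟩

/-- Above the height `y⁻(x)`, a region `v` without central and northern parts relative to `x` avoids
the column over `I_x(x)`. -/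
lemma cdc.avoid {v x : Reg} {T : Set Tile} (h : cdc v T x)
    (hN : Tile.N ∉ T ∧ Tile.NE ∉ T ∧ Tile.NW ∉ T) (hO : Tile.O ∉ T) {p : ℝ × ℝ}
    (hp : p ∈ interior v) (hy : ym x < p.2) : p.1 < xm x ∨ xp x < p.1 := by
  by_contra! hx
  exact hO (h.mem hp (χ := .O) ⟨hx, hy.le, (h.lt_yp hN hp).le⟩)

/-- Finitely many regions inside `M(v)` all have bottom edges below some interior point of `v`. -/
lemma exists_high {v : Reg} (hv : IsRegion v) (l : List Reg)
    (hl : ∀ x ∈ l, IsRegion x ∧ cdc x {Tile.O} v) : ∃ p ∈ interior v, ∀ x ∈ l, ym x < p.2 := by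
  have key : ∃ t < yp v, ∀ x ∈ l, ym x ≤ t := by
    induction l with
    | nil => exact ⟨yp v - 1, by linarith, by simp⟩
    | cons x l ih =>
      obtain ⟨t, ht, htl⟩ := ih fun y hy => hl y (List.mem_cons_of_mem _ hy)
      obtain ⟨hx, hxv⟩ := hl x List.mem_cons_self
      have hlt := hx.ym_lt_yp.trans_le (hxv.box_le hx).2.2.2
      refine ⟨max (ym x) t, max_lt hlt ht, ?_⟩
      intro y hy
      rcases List.mem_cons.1 hy with rfl | hy
      · exact le_max_left _ _
      · exact (htl y hy).trans (le_max_right _ _)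
  obtain ⟨t, ht, htl⟩ := key
  by_contra! hcon
  refine absurd (hv.yp_le (c := t) fun p hp => ?_) ht.not_ge
  obtain ⟨x, hx, hxp⟩ := hcon p hp
  exact hxp.trans (htl x hx)

/-- The next region `w` of the chain starts before the frame `f_i*` ends, whatever the sign of the
literal. -/
lemma overlap_fstar {n : ℕ} {S : VAssign n} (hS : S.AllConn) {i : Fin n} {sign : Bool} {w : Reg}
    {T T' U U' : Set Tile} (hT : Tile.O ∈ T) (hT' : Tile.O ∈ T')
    (h : if sign then cdc (S.f i) T w ∧ cdc w U (S.f i)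
      else cdc (S.fn i) T' w ∧ cdc w U' (S.fn i)) :
    xm w ≤ xp (fstar S i sign) := by
  have hf := (IsRegion.star hS i sign).2
  cases sign with
  | true =>
    simp only [if_true] at h
    exact (h.1.overlap hT hf).2
  | false =>
    simp only [Bool.false_eq_true, if_false] at h
    exact (h.1.overlap hT' hf).2

/-- A clause network has no solution falsifying all three literals: the columns `I_x(x)`,
`x ∈ X_c`, would leave no gap through which `v_c` could reach its top. -/
lemma not_all_falseLit {n : ℕ} {S : VAssign n} {c : Clause n} {C : CAssign} (hS : S.AllConn)
    (hCc : C.AllConn) (hC : NetC S c C) (hr : FalseLit S c.r c.sr) (hs : FalseLit S c.s c.ss)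
    (ht : FalseLit S c.t c.st) : False := by
  obtain ⟨hvc, hw0, hwrs, hwst, hw1, -, -⟩ := hCc
  obtain ⟨hH, -, -, k1, -, k2, k3, -, k4, k5, -, k6, b0, br, brs, bs, bst, bt, b1,
    v0, v1, vr, vrs, vs, vst, vt⟩ := hC
  have sr := span_of_falseLit hS hH hr
  have ss := span_of_falseLit hS hH hs
  have st := span_of_falseLit hS hH ht
  have o1 := (k1.overlap (by simp) hw0.1).2
  have o2 := overlap_fstar hS (by simp) (by simp) k2
  have o3 := (k3.overlap (by simp) hwrs.1).2
  have o4 := overlap_fstar hS (by simp) (by simp) k4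
  have o5 := (k5.overlap (by simp) hwst.1).2
  have o6 := overlap_fstar hS (by simp) (by simp) k6
  obtain ⟨p, hp, hhigh⟩ := exists_high hvc.1
    [C.w0, ustar S c.r c.sr, C.wrs, ustar S c.s c.ss, C.wst, ustar S c.t c.st, C.w1] (by
      simp only [List.forall_mem_cons, List.not_mem_nil, false_imp_iff, implies_true, and_true]
      exact ⟨⟨hw0.1, b0⟩, ⟨(IsRegion.star hS _ _).1, br⟩, ⟨hwrs.1, brs⟩,
        ⟨(IsRegion.star hS _ _).1, bs⟩, ⟨hwst.1, bst⟩, ⟨(IsRegion.star hS _ _).1, bt⟩,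
        ⟨hw1.1, b1⟩⟩)
  simp only [List.forall_mem_cons, List.not_mem_nil, false_imp_iff, implies_true, and_true]
    at hhigh
  obtain ⟨y0, yr, yrs, ys, yst, yt, y1⟩ := hhigh
  have left := v0.xm_lt (by simp) hp
  have right := v1.lt_xp (by simp) hp
  have a0 := v0.avoid (by simp) (by simp) hp y0
  have ar := vr.avoid (by simp) (by simp) hp yr
  have ars := vrs.avoid (by simp) (by simp) hp yrs
  have as := vs.avoid (by simp) (by simp) hp ys
  have ast := vst.avoid (by simp) (by simp) hp yst
  have at' := vt.avoid (by simp) (by simp) hp yt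
  have a1 := v1.avoid (by simp) (by simp) hp y1
  -- walking along the chain, `p` lies to the right of each column in turn
  have g0 := a0.resolve_left (by linarith)
  have gr := ar.resolve_left (by linarith)
  have grs := ars.resolve_left (by linarith)
  have gs := as.resolve_left (by linarith)
  have gst := ast.resolve_left (by linarith)
  have gt := at'.resolve_left (by linarith)
  have g1 := a1.resolve_left (by linarith)
  linarith

/-- If the network `N_φ` of a 3-SAT instance `φ` is satisfiable
by connected regions, then `φ` is satisfiable; indeed the assignment
`π(p_i) = true iff u_i is vertical w.r.t. f_i` (read off from a given solution
of `N_φ`) satisfies every clause of `φ`. -/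
theorem stmt14 {n : ℕ} (φ : List (Clause n)) (S : VAssign n)
    (C : Fin φ.length → CAssign)
    (hS : S.AllConn)
    (hCconn : ∀ j, (C j).AllConn)
    (hC : ∀ j, NetC S (φ.get j) (C j)) :
    ∀ j : Fin φ.length,
      (if (φ.get j).sr then Vert (S.u (φ.get j).r) (S.f (φ.get j).r)
        else ¬ Vert (S.u (φ.get j).r) (S.f (φ.get j).r)) ∨
      (if (φ.get j).ss then Vert (S.u (φ.get j).s) (S.f (φ.get j).s)
        else ¬ Vert (S.u (φ.get j).s) (S.f (φ.get j).s)) ∨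
      (if (φ.get j).st then Vert (S.u (φ.get j).t) (S.f (φ.get j).t)
        else ¬ Vert (S.u (φ.get j).t) (S.f (φ.get j).t)) := by
  intro j
  by_contra hcon
  simp only [not_or] at hcon
  exact not_all_falseLit hS (hCconn j) (hC j) hcon.1 hcon.2.1 hcon.2.2
end

section
/- (Mutual exclusion of dual instantiations.) Let u, u', f, f' be bounded regions such that u ⊆ M(f'), f ⊆ M(u'), (f, f') ∈ s⊗f, ⌜(u, f), and ⌜(u', f'). If u and u' are both vertical w.r.t. f and f' respectively, or both horizontal w.r.t. f and f' respectively, then x⁻(u) = x⁻(u'), y⁺(u) = y⁺(u'), x⁺(u) < x⁺(u') and y⁻(u) > y⁻(u'); in particular M(u) is properly contained in M(u') and ⌜(u, u') fails. -/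
/-!
The bounding rectangles of all four regions share their upper-left corner:
`⌜(u, f)`, `s⊗f` for `(f, f')` and `⌜(u', f')` give
`x⁻(u) = x⁻(f) = x⁻(f') = x⁻(u')`, and likewise for `y⁺`. In the vertical case
`x⁺(u) < x⁺(f) ≤ x⁺(u')` and `y⁻(u') < y⁻(f') ≤ y⁻(u)`; in the horizontal case
`x⁺(u) ≤ x⁺(f') < x⁺(u')` and `y⁻(u') ≤ y⁻(f) < y⁻(u)`. The weak inequalities come from
`u ⊆ M(f')` and `f ⊆ M(u')` by `xp_le_and_ym_le_of_subset_MBR`. Hence `M(u)` lies in `M(u')` and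
misses its corner `(x⁺(u'), y⁺(u'))`, while `⌜(u, u')` would force `x⁺` and `y⁻` of `u` to
lie on the same side of those of `u'`, both below or both above.
-/

open Set

/-- A nonempty set inside `M(b)` has its right and lower extremes bounded by those of `b`.
Nonemptiness rules out the junk value `sSup ∅ = sInf ∅ = 0`. -/
lemma xp_le_and_ym_le_of_subset_MBR {a b : Reg} (ha : a.Nonempty) (h : a ⊆ MBR b) :
    xp a ≤ xp b ∧ ym b ≤ ym a := by
  refine ⟨csSup_le (ha.image _) ?_, le_csInf (ha.image _) ?_⟩
  · rintro _ ⟨p, hp, rfl⟩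
    exact (h hp).1.2
  · rintro _ ⟨p, hp, rfl⟩
    exact (h hp).2.1

/-- Mutual exclusion of dual instantiations: Let `u, u', f, f'`
be bounded regions with `u ⊆ M(f')`, `f ⊆ M(u')`, `(f, f') ∈ s⊗f`, `⌜(u, f)`
and `⌜(u', f')`. If `u, u'` are both vertical or both horizontal w.r.t. their
respective frames, then `x⁻(u) = x⁻(u')`, `y⁺(u) = y⁺(u')`, `x⁺(u) < x⁺(u')`
and `y⁻(u) > y⁻(u')`; in particular `M(u)` is properly contained in `M(u')`
and `⌜(u, u')` fails. -/
theorem stmt16 (u u' f f' : Reg)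
    (hu : IsRegion u) (hu' : IsRegion u') (hf : IsRegion f) (hf' : IsRegion f')
    (h1 : u ⊆ MBR f') (h2 : f ⊆ MBR u')
    (h3 : RA RAs RAf f f')
    (h4 : ULC u f) (h5 : ULC u' f')
    (h6 : (Vert u f ∧ Vert u' f') ∨ (Horiz u f ∧ Horiz u' f')) :
    xm u = xm u' ∧ yp u = yp u' ∧ xp u < xp u' ∧ ym u' < ym u ∧
    MBR u ⊂ MBR u' ∧ ¬ ULC u u' := by
  obtain ⟨hx1, hy1⟩ := xp_le_and_ym_le_of_subset_MBR hu.1 h1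
  obtain ⟨hx2, hy2⟩ := xp_le_and_ym_le_of_subset_MBR hf.1 h2
  obtain ⟨p, hp⟩ := hf.1
  -- a point of `f` shows that `M(u')` is nonempty, so its corners belong to it
  obtain ⟨⟨hpx1, hpx2⟩, hpy1, hpy2⟩ := h2 hp
  have key : xm u = xm u' ∧ yp u = yp u' ∧ xp u < xp u' ∧ ym u' < ym u := by
    simp only [Vert, Horiz, RA, RAs, RAf, RAsi, RAfi] at h3 h6
    obtain ⟨⟨a1, a2⟩, a3, a4⟩ := h3
    rcases h6 with ⟨⟨⟨b1, b2⟩, b3, b4⟩, ⟨c1, c2⟩, c3, c4⟩ |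
      ⟨⟨⟨b1, b2⟩, b3, b4⟩, ⟨c1, c2⟩, c3, c4⟩ <;>
    exact ⟨by linarith, by linarith, by linarith, by linarith⟩
  obtain ⟨k1, k2, k3, k4⟩ := key
  refine ⟨k1, k2, k3, k4, ⟨?_, ?_⟩, ?_⟩
  · exact prod_mono (Icc_subset_Icc k1.ge k3.le) (Icc_subset_Icc k4.le k2.le)
  · intro h
    have hc : (xp u', yp u') ∈ MBR u' :=
      ⟨⟨hpx1.trans hpx2, le_rfl⟩, hpy1.trans hpy2, le_rfl⟩
    exact absurd (h hc).1.2 (not_le.2 k3)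
  · rintro (h | h)
    · exact lt_asymm k4 h.2.1
    · exact lt_asymm k3 h.1.2
end
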